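/- Let θ₁, ..., θ₆ ∈ (0, π), a_j = e^{iθ_j}, and let G be the associated Gram matrix with det G > 0. With z₀ = (-q₁ + √(q₁² - 4q₀q₂))/(2q₂) the distinguished root of the quadratic q₂z² + q₁z + q₀ = 0, define φ = ((a₁+a₂a₃)(a₁a₂a₃+1)(a₁+a₅a₆)(a₁a₅a₆+1)) / ((a₁a₂+a₃)(a₁a₃+a₂)(a₁a₅+a₆)(a₁a₆+a₅)) and ψ = ((a₁a₂a₄a₅ - z₀)(a₁a₃a₄a₆ - z₀)) / (a₄(a₁a₂a₃ + z₀)(a₁a₅a₆ + z₀)). Then φψ² = (2c₃₄² - c₃₃c₄₄ + 2i c₃₄ √(det G) sin θ₁)/(c₃₃ c₄₄), where c_ab are the cofactors of G. -/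

import Mathlib

open scoped Real ComplexConjugate


/-- The constant-in-`w` coefficient (after dividing by `q₀`). -/
theorem aux_X (a b c d e f q₀ q₁ q₂ g s : ℂ) (ha : a ≠ 0) (hb : b ≠ 0) (hc : c ≠ 0)
    (hd : d ≠ 0) (he : e ≠ 0) (hf : f ≠ 0)
    (hq₀ : q₀ = a*d + b*e + c*f + a*b*f + a*c*e + b*c*d + d*e*f + a*b*c*d*e*f)
    (hq₁ : q₁ = -(a - a⁻¹)*(d - d⁻¹) - (b - b⁻¹)*(e - e⁻¹) - (c - c⁻¹)*(f - f⁻¹))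
    (hq₂ : q₂ = a⁻¹*d⁻¹ + b⁻¹*e⁻¹ + c⁻¹*f⁻¹ + a⁻¹*b⁻¹*f⁻¹ + a⁻¹*c⁻¹*e⁻¹ + b⁻¹*c⁻¹*d⁻¹
      + d⁻¹*e⁻¹*f⁻¹ + a⁻¹*b⁻¹*c⁻¹*d⁻¹*e⁻¹*f⁻¹)
    (hg : g = (d+d⁻¹)/2 + (c+c⁻¹)/2*((e+e⁻¹)/2) - ((a+a⁻¹)/2)^2*((d+d⁻¹)/2)
      + (a+a⁻¹)/2*((c+c⁻¹)/2)*((f+f⁻¹)/2) + (a+a⁻¹)/2*((b+b⁻¹)/2)*((e+e⁻¹)/2)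
      + (b+b⁻¹)/2*((f+f⁻¹)/2))
    (hs : s = (a - a⁻¹)/2) :
    (a+b*c)*(a*b*c+1)*(a+e*f)*(a*e*f+1) * (q₀ - (a*b*d*e)*(a*c*d*f)*q₂)
      = -4*a^2*b*c*e*f*d * ((g - s*q₁/4) * (q₀ - (a*b*c)*(a*e*f)*q₂)
        - s/2*q₂*((a*b*c)*(a*e*f)*q₁ - (a*b*c+a*e*f)*q₀)) := by
  subst hq₀ hq₁ hq₂ hg hs
  field_simp
  ring

/-- The `w`-coefficient. -/
theorem aux_Y (a b c d e f q₀ q₁ q₂ g s : ℂ) (ha : a ≠ 0) (hb : b ≠ 0) (hc : c ≠ 0)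
    (hd : d ≠ 0) (he : e ≠ 0) (hf : f ≠ 0)
    (hq₀ : q₀ = a*d + b*e + c*f + a*b*f + a*c*e + b*c*d + d*e*f + a*b*c*d*e*f)
    (hq₁ : q₁ = -(a - a⁻¹)*(d - d⁻¹) - (b - b⁻¹)*(e - e⁻¹) - (c - c⁻¹)*(f - f⁻¹))
    (hq₂ : q₂ = a⁻¹*d⁻¹ + b⁻¹*e⁻¹ + c⁻¹*f⁻¹ + a⁻¹*b⁻¹*f⁻¹ + a⁻¹*c⁻¹*e⁻¹ + b⁻¹*c⁻¹*d⁻¹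
      + d⁻¹*e⁻¹*f⁻¹ + a⁻¹*b⁻¹*c⁻¹*d⁻¹*e⁻¹*f⁻¹)
    (hg : g = (d+d⁻¹)/2 + (c+c⁻¹)/2*((e+e⁻¹)/2) - ((a+a⁻¹)/2)^2*((d+d⁻¹)/2)
      + (a+a⁻¹)/2*((c+c⁻¹)/2)*((f+f⁻¹)/2) + (a+a⁻¹)/2*((b+b⁻¹)/2)*((e+e⁻¹)/2)
      + (b+b⁻¹)/2*((f+f⁻¹)/2))
    (hs : s = (a - a⁻¹)/2) :
    (a+b*c)*(a*b*c+1)*(a+e*f)*(a*e*f+1) *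
        ((a*b*d*e)*(a*c*d*f)*q₁ + (a*b*d*e+a*c*d*f)*q₀)
      = -4*a^2*b*c*e*f*d * ((g - s*q₁/4) * ((a*b*c)*(a*e*f)*q₁ - (a*b*c+a*e*f)*q₀)
        + s/2*(q₀*(q₀ - (a*b*c)*(a*e*f)*q₂)
          + q₁*((a*b*c)*(a*e*f)*q₁ - (a*b*c+a*e*f)*q₀))) := by
  subst hq₀ hq₁ hq₂ hg hs
  field_simp
  ring

/-- The key identity. -/
theorem aux_main (a b c d e f q₀ q₁ q₂ g s w r : ℂ) (ha : a ≠ 0) (hb : b ≠ 0) (hc : c ≠ 0)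
    (hd : d ≠ 0) (he : e ≠ 0) (hf : f ≠ 0)
    (hq₀ : q₀ = a*d + b*e + c*f + a*b*f + a*c*e + b*c*d + d*e*f + a*b*c*d*e*f)
    (hq₁ : q₁ = -(a - a⁻¹)*(d - d⁻¹) - (b - b⁻¹)*(e - e⁻¹) - (c - c⁻¹)*(f - f⁻¹))
    (hq₂ : q₂ = a⁻¹*d⁻¹ + b⁻¹*e⁻¹ + c⁻¹*f⁻¹ + a⁻¹*b⁻¹*f⁻¹ + a⁻¹*c⁻¹*e⁻¹ + b⁻¹*c⁻¹*d⁻¹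
      + d⁻¹*e⁻¹*f⁻¹ + a⁻¹*b⁻¹*c⁻¹*d⁻¹*e⁻¹*f⁻¹)
    (hg : g = (d+d⁻¹)/2 + (c+c⁻¹)/2*((e+e⁻¹)/2) - ((a+a⁻¹)/2)^2*((d+d⁻¹)/2)
      + (a+a⁻¹)/2*((c+c⁻¹)/2)*((f+f⁻¹)/2) + (a+a⁻¹)/2*((b+b⁻¹)/2)*((e+e⁻¹)/2)
      + (b+b⁻¹)/2*((f+f⁻¹)/2))
    (hs : s = (a - a⁻¹)/2) (hr : r = w/2 - q₁/4) (hw : w^2 = q₁*w - q₀*q₂) :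
    (a+b*c)*(a*b*c+1)*(a+e*f)*(a*e*f+1) * ((a*b*d*e*w+q₀)*(a*c*d*f*w+q₀))
      = -4*a^2*b*c*e*f * (g + s*r) * (d*(a*b*c*w-q₀)*(a*e*f*w-q₀)) := by
  have X := aux_X a b c d e f q₀ q₁ q₂ g s ha hb hc hd he hf hq₀ hq₁ hq₂ hg hs
  have Y := aux_Y a b c d e f q₀ q₁ q₂ g s ha hb hc hd he hf hq₀ hq₁ hq₂ hg hs
  clear hq₀ hq₁ hq₂ hg hs
  have N : (a*b*d*e*w+q₀)*(a*c*d*f*w+q₀) = w*((a*b*d*e)*(a*c*d*f)*q₁ + (a*b*d*e+a*c*d*f)*q₀)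
      + q₀ * (q₀ - (a*b*d*e)*(a*c*d*f)*q₂) := by
    linear_combination ((a*b*d*e)*(a*c*d*f)) * hw
  have M : (a*b*c*w-q₀)*(a*e*f*w-q₀) = w*((a*b*c)*(a*e*f)*q₁ - (a*b*c+a*e*f)*q₀)
      + q₀ * (q₀ - (a*b*c)*(a*e*f)*q₂) := by
    linear_combination ((a*b*c)*(a*e*f)) * hw
  rw [mul_assoc d, M, N, hr]
  generalize (a+b*c)*(a*b*c+1)*(a+e*f)*(a*e*f+1) = n at *
  generalize ((a*b*d*e)*(a*c*d*f)*q₁ + (a*b*d*e+a*c*d*f)*q₀) = N1 at *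
  generalize q₀ - (a*b*d*e)*(a*c*d*f)*q₂ = N0 at *
  generalize ((a*b*c)*(a*e*f)*q₁ - (a*b*c+a*e*f)*q₀) = M1 at *
  generalize q₀ - (a*b*c)*(a*e*f)*q₂ = M0 at *
  linear_combination q₀ * X + w * Y + (2*a^2*b*c*e*f*d*s*M1) * hw

theorem aux_c (a b c : ℂ) (ha : a ≠ 0) (hb : b ≠ 0) (hc : c ≠ 0) :
    4*a^2*b^2*c^2*(1 - ((a+a⁻¹)/2)^2 - ((b+b⁻¹)/2)^2 - ((c+c⁻¹)/2)^2
      - 2*((a+a⁻¹)/2)*((b+b⁻¹)/2)*((c+c⁻¹)/2))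
    = -((a+b*c)*(a*b*c+1)*((a*b+c)*(a*c+b))) := by
  field_simp
  ring

/-- discriminant -/
theorem aux_D (a b c d e f q₀ q₁ q₂ x y z t u v D : ℂ) (ha : a ≠ 0) (hb : b ≠ 0) (hc : c ≠ 0)
    (hd : d ≠ 0) (he : e ≠ 0) (hf : f ≠ 0)
    (hq₀ : q₀ = a*d + b*e + c*f + a*b*f + a*c*e + b*c*d + d*e*f + a*b*c*d*e*f)
    (hq₁ : q₁ = -(a - a⁻¹)*(d - d⁻¹) - (b - b⁻¹)*(e - e⁻¹) - (c - c⁻¹)*(f - f⁻¹))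
    (hq₂ : q₂ = a⁻¹*d⁻¹ + b⁻¹*e⁻¹ + c⁻¹*f⁻¹ + a⁻¹*b⁻¹*f⁻¹ + a⁻¹*c⁻¹*e⁻¹ + b⁻¹*c⁻¹*d⁻¹
      + d⁻¹*e⁻¹*f⁻¹ + a⁻¹*b⁻¹*c⁻¹*d⁻¹*e⁻¹*f⁻¹)
    (hx : x = (a+a⁻¹)/2) (hy : y = (b+b⁻¹)/2) (hz : z = (c+c⁻¹)/2)
    (ht : t = (d+d⁻¹)/2) (hu : u = (e+e⁻¹)/2) (hv : v = (f+f⁻¹)/2)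
    (hD : D = 1 - x^2 - y^2 - z^2 - t^2 - u^2 - v^2 - 2*x*y*z - 2*x*u*v - 2*y*t*v - 2*z*t*u
      + x^2*t^2 + y^2*u^2 + z^2*v^2 - 2*x*t*y*u - 2*x*t*z*v - 2*y*u*z*v) :
    q₁^2 - 4*q₀*q₂ = 16 * D := by
  subst hD hx hy hz ht hu hv hq₀ hq₁ hq₂
  field_simp
  ring

theorem phi_psi_sq_eq
    (θ₁ θ₂ θ₃ θ₄ θ₅ θ₆ : ℝ)
    (h₁ : θ₁ ∈ Set.Ioo 0 π) (h₂ : θ₂ ∈ Set.Ioo 0 π) (h₃ : θ₃ ∈ Set.Ioo 0 π)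
    (h₄ : θ₄ ∈ Set.Ioo 0 π) (h₅ : θ₅ ∈ Set.Ioo 0 π) (h₆ : θ₆ ∈ Set.Ioo 0 π)
    (a₁ a₂ a₃ a₄ a₅ a₆ : ℂ)
    (ha₁ : a₁ = Complex.exp (θ₁ * Complex.I)) (ha₂ : a₂ = Complex.exp (θ₂ * Complex.I))
    (ha₃ : a₃ = Complex.exp (θ₃ * Complex.I)) (ha₄ : a₄ = Complex.exp (θ₄ * Complex.I))
    (ha₅ : a₅ = Complex.exp (θ₅ * Complex.I)) (ha₆ : a₆ = Complex.exp (θ₆ * Complex.I))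
    (G : Matrix (Fin 4) (Fin 4) ℝ)
    (hG : G = !![1, -Real.cos θ₁, -Real.cos θ₂, -Real.cos θ₆;
                 -Real.cos θ₁, 1, -Real.cos θ₃, -Real.cos θ₅;
                 -Real.cos θ₂, -Real.cos θ₃, 1, -Real.cos θ₄;
                 -Real.cos θ₆, -Real.cos θ₅, -Real.cos θ₄, 1])
    (hdet : 0 < G.det)
    (q₀ q₁ q₂ : ℂ)
    (hq₀ : q₀ = a₁*a₄ + a₂*a₅ + a₃*a₆ + a₁*a₂*a₆ + a₁*a₃*a₅ + a₂*a₃*a₄ + a₄*a₅*a₆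
      + a₁*a₂*a₃*a₄*a₅*a₆)
    (hq₁ : q₁ = -(a₁ - a₁⁻¹)*(a₄ - a₄⁻¹) - (a₂ - a₂⁻¹)*(a₅ - a₅⁻¹) - (a₃ - a₃⁻¹)*(a₆ - a₆⁻¹))
    (hq₂ : q₂ = conj q₀)
    (z₀ : ℂ)
    (hz₀ : z₀ = (-q₁ + ((Real.sqrt ((q₁ ^ 2 - 4 * q₀ * q₂).re) : ℝ) : ℂ)) / (2 * q₂))
    (c₃₃ c₄₄ c₃₄ : ℝ)
    (hc₃₃ : c₃₃ = (!![1, -Real.cos θ₁, -Real.cos θ₆;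
                     -Real.cos θ₁, 1, -Real.cos θ₅;
                     -Real.cos θ₆, -Real.cos θ₅, 1] : Matrix (Fin 3) (Fin 3) ℝ).det)
    (hc₄₄ : c₄₄ = (!![1, -Real.cos θ₁, -Real.cos θ₂;
                     -Real.cos θ₁, 1, -Real.cos θ₃;
                     -Real.cos θ₂, -Real.cos θ₃, 1] : Matrix (Fin 3) (Fin 3) ℝ).det)
    (hc₃₄ : c₃₄ = -(!![1, -Real.cos θ₁, -Real.cos θ₂;
                      -Real.cos θ₁, 1, -Real.cos θ₃;
                      -Real.cos θ₆, -Real.cos θ₅, -Real.cos θ₄] : Matrix (Fin 3) (Fin 3) ℝ).det)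
    (φ ψ : ℂ)
    (hφ : φ = ((a₁ + a₂*a₃) * (a₁*a₂*a₃ + 1) * (a₁ + a₅*a₆) * (a₁*a₅*a₆ + 1))
      / ((a₁*a₂ + a₃) * (a₁*a₃ + a₂) * (a₁*a₅ + a₆) * (a₁*a₆ + a₅)))
    (hψ : ψ = ((a₁*a₂*a₄*a₅ - z₀) * (a₁*a₃*a₄*a₆ - z₀))
      / (a₄ * (a₁*a₂*a₃ + z₀) * (a₁*a₅*a₆ + z₀))) :
    φ * ψ ^ 2 = (((2 * c₃₄ ^ 2 - c₃₃ * c₄₄ : ℝ) : ℂ)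
        + 2 * Complex.I * (c₃₄ : ℂ) * ((Real.sqrt G.det : ℝ) : ℂ) * ((Real.sin θ₁ : ℝ) : ℂ))
      / ((c₃₃ * c₄₄ : ℝ) : ℂ) := by
  have hs₁ := Real.sin_pos_of_mem_Ioo h₁
  have hs₂ := Real.sin_pos_of_mem_Ioo h₂
  have hs₃ := Real.sin_pos_of_mem_Ioo h₃
  have hs₄ := Real.sin_pos_of_mem_Ioo h₄
  have hs₅ := Real.sin_pos_of_mem_Ioo h₅
  have hs₆ := Real.sin_pos_of_mem_Ioo h₆
  have key : ∀ (θ : ℝ) (a : ℂ), a = Complex.exp (θ * Complex.I) → a ≠ 0 ∧ conj a = a⁻¹ ∧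
      ((Real.cos θ : ℝ) : ℂ) = (a + a⁻¹)/2 ∧
      Complex.I * ((Real.sin θ : ℝ) : ℂ) = (a - a⁻¹)/2 := by
    rintro θ a rfl
    refine ⟨Complex.exp_ne_zero _, ?_, ?_, ?_⟩
    · rw [← Complex.exp_conj, ← Complex.exp_neg]
      simp
    · rw [← Complex.exp_neg, Complex.ofReal_cos, Complex.cos]
      simp
    · rw [← Complex.exp_neg, Complex.ofReal_sin, Complex.sin]
      simp only [neg_mul]
      linear_combination ((Complex.exp (-(θ * Complex.I)) - Complex.exp (θ * Complex.I))/2) *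
        Complex.I_sq
  obtain ⟨n₁, k₁, C₁, S₁⟩ := key _ _ ha₁
  obtain ⟨n₂, k₂, C₂, S₂⟩ := key _ _ ha₂
  obtain ⟨n₃, k₃, C₃, S₃⟩ := key _ _ ha₃
  obtain ⟨n₄, k₄, C₄, S₄⟩ := key _ _ ha₄
  obtain ⟨n₅, k₅, C₅, S₅⟩ := key _ _ ha₅
  obtain ⟨n₆, k₆, C₆, S₆⟩ := key _ _ ha₆
  have hq₂' : q₂ = a₁⁻¹*a₄⁻¹ + a₂⁻¹*a₅⁻¹ + a₃⁻¹*a₆⁻¹ + a₁⁻¹*a₂⁻¹*a₆⁻¹ + a₁⁻¹*a₃⁻¹*a₅⁻¹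
      + a₂⁻¹*a₃⁻¹*a₄⁻¹ + a₄⁻¹*a₅⁻¹*a₆⁻¹ + a₁⁻¹*a₂⁻¹*a₃⁻¹*a₄⁻¹*a₅⁻¹*a₆⁻¹ := by
    rw [hq₂, hq₀]
    simp only [map_add, map_mul, k₁, k₂, k₃, k₄, k₅, k₆]
  clear ha₁ ha₂ ha₃ ha₄ ha₅ ha₆ key
  have hq₁' : q₁ = ((4 * (Real.sin θ₁ * Real.sin θ₄ + Real.sin θ₂ * Real.sin θ₅
      + Real.sin θ₃ * Real.sin θ₆) : ℝ) : ℂ) := by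
    rw [hq₁]
    rw [show a₁ - a₁⁻¹ = 2 * (Complex.I * ((Real.sin θ₁ : ℝ) : ℂ)) by rw [S₁]; ring,
      show a₂ - a₂⁻¹ = 2 * (Complex.I * ((Real.sin θ₂ : ℝ) : ℂ)) by rw [S₂]; ring,
      show a₃ - a₃⁻¹ = 2 * (Complex.I * ((Real.sin θ₃ : ℝ) : ℂ)) by rw [S₃]; ring,
      show a₄ - a₄⁻¹ = 2 * (Complex.I * ((Real.sin θ₄ : ℝ) : ℂ)) by rw [S₄]; ring,
      show a₅ - a₅⁻¹ = 2 * (Complex.I * ((Real.sin θ₅ : ℝ) : ℂ)) by rw [S₅]; ring,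
      show a₆ - a₆⁻¹ = 2 * (Complex.I * ((Real.sin θ₆ : ℝ) : ℂ)) by rw [S₆]; ring]
    simp only [Complex.ofReal_mul, Complex.ofReal_add, Complex.ofReal_ofNat]
    linear_combination (-4 * ((Real.sin θ₁ : ℝ) : ℂ) * ((Real.sin θ₄ : ℝ) : ℂ)
      -4 * ((Real.sin θ₂ : ℝ) : ℂ) * ((Real.sin θ₅ : ℝ) : ℂ)
      -4 * ((Real.sin θ₃ : ℝ) : ℂ) * ((Real.sin θ₆ : ℝ) : ℂ)) * Complex.I_sq
  have hGd : G.det = 1 - Real.cos θ₁^2 - Real.cos θ₂^2 - Real.cos θ₃^2 - Real.cos θ₄^2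
      - Real.cos θ₅^2 - Real.cos θ₆^2 - 2*Real.cos θ₁*Real.cos θ₂*Real.cos θ₃
      - 2*Real.cos θ₁*Real.cos θ₅*Real.cos θ₆ - 2*Real.cos θ₂*Real.cos θ₄*Real.cos θ₆
      - 2*Real.cos θ₃*Real.cos θ₄*Real.cos θ₅ + Real.cos θ₁^2*Real.cos θ₄^2
      + Real.cos θ₂^2*Real.cos θ₅^2 + Real.cos θ₃^2*Real.cos θ₆^2
      - 2*Real.cos θ₁*Real.cos θ₄*Real.cos θ₂*Real.cos θ₅
      - 2*Real.cos θ₁*Real.cos θ₄*Real.cos θ₃*Real.cos θ₆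
      - 2*Real.cos θ₂*Real.cos θ₅*Real.cos θ₃*Real.cos θ₆ := by
    rw [hG, Matrix.det_succ_row_zero]
    simp [Fin.sum_univ_succ, Matrix.det_fin_three, Fin.succAbove]
    ring
  have hc₃₃' : c₃₃ = 1 - Real.cos θ₁^2 - Real.cos θ₅^2 - Real.cos θ₆^2
      - 2*Real.cos θ₁*Real.cos θ₅*Real.cos θ₆ := by
    rw [hc₃₃]; simp [Matrix.det_fin_three]; ring
  have hc₄₄' : c₄₄ = 1 - Real.cos θ₁^2 - Real.cos θ₂^2 - Real.cos θ₃^2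
      - 2*Real.cos θ₁*Real.cos θ₂*Real.cos θ₃ := by
    rw [hc₄₄]; simp [Matrix.det_fin_three]; ring
  have hc₃₄' : c₃₄ = Real.cos θ₄ + Real.cos θ₃ * Real.cos θ₅ - Real.cos θ₁^2*Real.cos θ₄
      + Real.cos θ₁*Real.cos θ₃*Real.cos θ₆ + Real.cos θ₁*Real.cos θ₂*Real.cos θ₅
      + Real.cos θ₂*Real.cos θ₆ := by
    rw [hc₃₄]; simp [Matrix.det_fin_three]; ring
  have hjac : c₃₃ * c₄₄ = c₃₄^2 + G.det * Real.sin θ₁^2 := by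
    rw [Real.sin_sq, hGd, hc₃₃', hc₄₄', hc₃₄']; ring
  have hcc : 0 < c₃₃ * c₄₄ := by rw [hjac]; positivity
  have hDc : q₁^2 - 4*q₀*q₂ = 16 * ((G.det : ℝ) : ℂ) := by
    refine aux_D a₁ a₂ a₃ a₄ a₅ a₆ q₀ q₁ q₂ _ _ _ _ _ _ _ n₁ n₂ n₃ n₄ n₅ n₆ hq₀ hq₁ hq₂'
      C₁ C₂ C₃ C₄ C₅ C₆ ?_
    rw [hGd]
    simp only [Complex.ofReal_mul, Complex.ofReal_add, Complex.ofReal_sub, Complex.ofReal_pow,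
      Complex.ofReal_ofNat, Complex.ofReal_one]
  have hg : (c₃₄ : ℂ) = (a₄+a₄⁻¹)/2 + (a₃+a₃⁻¹)/2*((a₅+a₅⁻¹)/2)
      - ((a₁+a₁⁻¹)/2)^2*((a₄+a₄⁻¹)/2)
      + (a₁+a₁⁻¹)/2*((a₃+a₃⁻¹)/2)*((a₆+a₆⁻¹)/2) + (a₁+a₁⁻¹)/2*((a₂+a₂⁻¹)/2)*((a₅+a₅⁻¹)/2)
      + (a₂+a₂⁻¹)/2*((a₆+a₆⁻¹)/2) := by
    rw [hc₃₄', ← C₁, ← C₂, ← C₃, ← C₄, ← C₅, ← C₆]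
    simp only [Complex.ofReal_mul, Complex.ofReal_add, Complex.ofReal_sub, Complex.ofReal_pow]
  have e44 : 4*a₁^2*a₂^2*a₃^2*(c₄₄ : ℂ)
      = -((a₁+a₂*a₃)*(a₁*a₂*a₃+1)*((a₁*a₂+a₃)*(a₁*a₃+a₂))) := by
    rw [← aux_c a₁ a₂ a₃ n₁ n₂ n₃, hc₄₄', ← C₁, ← C₂, ← C₃]
    simp only [Complex.ofReal_mul, Complex.ofReal_sub, Complex.ofReal_pow,
      Complex.ofReal_ofNat, Complex.ofReal_one]
  have e33 : 4*a₁^2*a₅^2*a₆^2*(c₃₃ : ℂ)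
      = -((a₁+a₅*a₆)*(a₁*a₅*a₆+1)*((a₁*a₅+a₆)*(a₁*a₆+a₅))) := by
    rw [← aux_c a₁ a₅ a₆ n₁ n₅ n₆, hc₃₃', ← C₁, ← C₅, ← C₆]
    simp only [Complex.ofReal_mul, Complex.ofReal_sub, Complex.ofReal_pow,
      Complex.ofReal_ofNat, Complex.ofReal_one]
  have hS : 0 < Real.sin θ₁ * Real.sin θ₄ + Real.sin θ₂ * Real.sin θ₅
      + Real.sin θ₃ * Real.sin θ₆ := by positivity
  generalize hSd : Real.sin θ₁ * Real.sin θ₄ + Real.sin θ₂ * Real.sin θ₅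
      + Real.sin θ₃ * Real.sin θ₆ = S at *
  have hrpos : 0 < Real.sqrt G.det := Real.sqrt_pos.2 hdet
  have hrsq : Real.sqrt G.det ^ 2 = G.det := Real.sq_sqrt hdet.le
  have hroot : Real.sqrt ((q₁ ^ 2 - 4 * q₀ * q₂).re) = 4 * Real.sqrt G.det := by
    rw [hDc, show (16 * ((G.det : ℝ) : ℂ)).re = 4^2 * G.det by simp; norm_num,
      Real.sqrt_mul (by norm_num), Real.sqrt_sq (by norm_num)]
  rw [hroot] at hz₀
  rw [← hrsq] at hDc hjac
  generalize Real.sqrt G.det = r at *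
  have hw0 : 0 < 2 * (S + r) := by positivity
  obtain ⟨w, hw⟩ : ∃ w : ℂ, w = ((2 * (S + r) : ℝ) : ℂ) := ⟨_, rfl⟩
  have hwne : w ≠ 0 := by rw [hw]; exact_mod_cast hw0.ne'
  have hrne : (r : ℂ) ≠ 0 := by exact_mod_cast hrpos.ne'
  have hr : (r : ℂ) = w/2 - q₁/4 := by
    rw [hw, hq₁']; push_cast; ring
  have hw2 : w^2 = q₁*w - q₀*q₂ := by
    rw [Complex.ofReal_pow, hr] at hDc
    linear_combination (-1/4) * hDc
  have hz : z₀ = -q₀ / w := by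
    rw [hz₀]
    by_cases h : q₂ = 0
    · have : q₀ = 0 := by
        rw [hq₂] at h; simpa using h
      rw [h, this]; simp
    · rw [div_eq_div_iff (by simpa using h) hwne]
      push_cast
      rw [hr]
      linear_combination 2 * hw2
  have hconjw : conj w = w := by rw [hw, Complex.conj_ofReal]
  have hne : ∀ A : ℂ, A ≠ 0 → conj A = A⁻¹ → A * w - q₀ ≠ 0 := by
    intro A hA hcA h0
    have h1 : q₀ = A * w := by linear_combination -h0
    have h2 : q₂ = A⁻¹ * w := by rw [hq₂, h1, map_mul, hcA, hconjw]
    have h3 : q₀ * q₂ = w^2 := by rw [h1, h2]; field_simp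
    have h4 : w * (r : ℂ) = 0 := by rw [hr]; linear_combination (1/4) * hw2 - (1/4) * h3
    exact (mul_ne_zero hwne hrne) h4
  have dA : a₁*a₂*a₃*w - q₀ ≠ 0 := hne _ (by simp [n₁, n₂, n₃, n₅, n₆]) (by
    simp only [map_mul, k₁, k₂, k₃, mul_inv])
  have dE : a₁*a₅*a₆*w - q₀ ≠ 0 := hne _ (by simp [n₁, n₂, n₃, n₅, n₆]) (by
    simp only [map_mul, k₁, k₅, k₆, mul_inv])
  have M := aux_main a₁ a₂ a₃ a₄ a₅ a₆ q₀ q₁ q₂ c₃₄ (Complex.I * ((Real.sin θ₁ : ℝ) : ℂ)) w r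
    n₁ n₂ n₃ n₄ n₅ n₆ hq₀ hq₁ hq₂' hg S₁ hr hw2
  have hψ' : ψ = ((a₁*a₂*a₄*a₅*w+q₀)*(a₁*a₃*a₄*a₆*w+q₀))
      / (a₄*(a₁*a₂*a₃*w-q₀)*(a₁*a₅*a₆*w-q₀)) := by
    rw [hψ, hz, show a₁*a₂*a₄*a₅ - -q₀/w = (a₁*a₂*a₄*a₅*w+q₀)/w by field_simp; ring,
      show a₁*a₃*a₄*a₆ - -q₀/w = (a₁*a₃*a₄*a₆*w+q₀)/w by field_simp; ring,
      show a₁*a₂*a₃ + -q₀/w = (a₁*a₂*a₃*w-q₀)/w by field_simp; ring,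
      show a₁*a₅*a₆ + -q₀/w = (a₁*a₅*a₆*w-q₀)/w by field_simp; ring]
    field_simp
  have hcne : (c₃₃ : ℂ) * c₄₄ ≠ 0 := by exact_mod_cast hcc.ne'
  have hc3 := left_ne_zero_of_mul hcne
  have hc4 := right_ne_zero_of_mul hcne
  have hD0 : a₄*(a₁*a₂*a₃*w-q₀)*(a₁*a₅*a₆*w-q₀) ≠ 0 := mul_ne_zero (mul_ne_zero n₄ dA) dE
  have hm : ((a₁+a₂*a₃)*(a₁*a₂*a₃+1)*((a₁*a₂+a₃)*(a₁*a₃+a₂))) ≠ 0 := by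
    intro h; rw [h] at e44; simp [n₁, n₂, n₃] at e44; exact hc4 (by simp [e44])
  have hm' : ((a₁+a₅*a₆)*(a₁*a₅*a₆+1)*((a₁*a₅+a₆)*(a₁*a₆+a₅))) ≠ 0 := by
    intro h; rw [h] at e33; simp [n₁, n₅, n₆] at e33; exact hc3 (by simp [e33])
  have hm1 := right_ne_zero_of_mul hm
  have hm2 := right_ne_zero_of_mul hm'
  have hn1 := left_ne_zero_of_mul hm
  have hn2 := left_ne_zero_of_mul hm'
  have hnum : (((2 * c₃₄ ^ 2 - c₃₃ * c₄₄ : ℝ) : ℂ)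
        + 2 * Complex.I * (c₃₄ : ℂ) * (r : ℂ) * ((Real.sin θ₁ : ℝ) : ℂ))
      = ((c₃₄ : ℂ) + (Complex.I * ((Real.sin θ₁ : ℝ) : ℂ)) * r)^2 := by
    rw [hjac]
    simp only [Complex.ofReal_mul, Complex.ofReal_add, Complex.ofReal_sub, Complex.ofReal_pow,
      Complex.ofReal_ofNat]
    linear_combination (-((Real.sin θ₁ : ℝ) : ℂ)^2 * (r:ℂ)^2) * Complex.I_sq
  rw [hnum, hφ, hψ', Complex.ofReal_mul]
  generalize (a₁*a₂*a₄*a₅*w+q₀)*(a₁*a₃*a₄*a₆*w+q₀) = N at *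
  generalize a₄*(a₁*a₂*a₃*w-q₀)*(a₁*a₅*a₆*w-q₀) = P at *
  generalize (c₃₄ : ℂ) + (Complex.I * ((Real.sin θ₁ : ℝ) : ℂ)) * r = R at *
  rw [show (a₁ + a₂*a₃) * (a₁*a₂*a₃ + 1) * (a₁ + a₅*a₆) * (a₁*a₅*a₆ + 1)
    = ((a₁ + a₂*a₃) * (a₁*a₂*a₃ + 1)) * ((a₁ + a₅*a₆) * (a₁*a₅*a₆ + 1)) by ring] at *
  rw [show (a₁*a₂ + a₃) * (a₁*a₃ + a₂) * (a₁*a₅ + a₆) * (a₁*a₆ + a₅)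
    = ((a₁*a₂ + a₃) * (a₁*a₃ + a₂)) * ((a₁*a₅ + a₆) * (a₁*a₆ + a₅)) by ring]
  generalize (a₁ + a₂*a₃) * (a₁*a₂*a₃ + 1) = u₁ at *
  generalize (a₁ + a₅*a₆) * (a₁*a₅*a₆ + 1) = u₂ at *
  generalize (a₁*a₂ + a₃) * (a₁*a₃ + a₂) = v₁ at *
  generalize (a₁*a₅ + a₆) * (a₁*a₆ + a₅) = v₂ at *
  rw [div_pow, div_mul_div_comm, div_eq_div_iff
    (mul_ne_zero (mul_ne_zero hm1 hm2) (pow_ne_zero 2 hD0)) hcne]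
  have hK : 16 * a₁^4*a₂^2*a₃^2*a₅^2*a₆^2 * (u₁ * u₂) ≠ 0 := by
    simp [n₁, n₂, n₃, n₅, n₆, hn1, hn2]
  apply mul_left_cancel₀ hK
  linear_combination (u₁*u₂)^2 * N^2 * (4*a₁^2*a₂^2*a₃^2*(c₄₄ : ℂ)) * e33 - (u₁*u₂)^2 * N^2 * (u₂*v₂) * e44 + (u₁*u₂*v₁*v₂) * (u₁*u₂*N - 4*a₁^2*a₂*a₃*a₅*a₆*R*P) * M
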